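/- arXiv:hep-th/9701043 — 2 statements merged into one kernel-verified Lean document; each statement's English description precedes it below -/
import Mathlib

section
/- For all integers n and all integers r, s with r ≥ 1, s ≥ 1 and all j, k ∈ ℂ: Λ_ch(n,j) = Λ(r,s,j,k) if and only if j = j_rc^+(r,s,n,k) or j = j_rc^−(r,s,n,k). Moreover, for either sign choice σ ∈ {+,−}, Λ_ch(n, j_rc^σ(r,s,n,k)) = Λ(r,s, j_rc^σ(r,s,n,k), k) = Λ_rc^σ(r,s,n,k). -/
/-!
With `t = (r - (k+2)s)/2`, the relaxed eigenvalue is `Λ = t² - (j + 1/2)²`, so completing the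
square gives `Λ_ch(n,j) - Λ(r,s,j,k) = (j + n + 1/2)² - t² = (j - j_rc^+)(j - j_rc^-)`.
The equivalence is the vanishing of this product, and the common value at either root is
computed from `Λ_ch`, which is affine in `j`.
-/

/-- The Kac–Kazhdan spin `𝗃⁺(r,s,k) = (r−1)/2 − (k+2)(s−1)/2`. -/
noncomputable def jplus (r s : ℤ) (k : ℂ) : ℂ :=
  ((r : ℂ) - 1) / 2 - (k + 2) * ((s : ℂ) - 1) / 2

/-- The Kac–Kazhdan spin `𝗃⁻(r,s,k) = −(r+1)/2 + (k+2)s/2`. -/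
noncomputable def jminus (r s : ℤ) (k : ℂ) : ℂ :=
  -((r : ℂ) + 1) / 2 + (k + 2) * (s : ℂ) / 2

/-- `Λ(r,s,j,k) = −(j − 𝗃⁻(r,s,k))·(j − 𝗃⁺(r,s+1,k))`. -/
noncomputable def Lam (r s : ℤ) (j k : ℂ) : ℂ :=
  -(j - jminus r s k) * (j - jplus r (s + 1) k)

/-- Charged singular-vector eigenvalue `Λ_ch(p,j) = p(p+1) + 2pj`. -/
noncomputable def Lamch (p : ℤ) (j : ℂ) : ℂ :=
  (p : ℂ) * ((p : ℂ) + 1) + 2 * (p : ℂ) * j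

/-- `j_rc^+(r,s,n,k) = −n − 1/2 + (r − (k+2)s)/2`. -/
noncomputable def jrcP (r s n : ℤ) (k : ℂ) : ℂ :=
  -(n : ℂ) - 1 / 2 + ((r : ℂ) - (k + 2) * (s : ℂ)) / 2

/-- `j_rc^−(r,s,n,k) = −n − 1/2 − (r − (k+2)s)/2`. -/
noncomputable def jrcM (r s n : ℤ) (k : ℂ) : ℂ :=
  -(n : ℂ) - 1 / 2 - ((r : ℂ) - (k + 2) * (s : ℂ)) / 2

/-- `Λ_rc^+(r,s,n,k) = −n² + n(r − (k+2)s)`. -/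
noncomputable def LamrcP (r s n : ℤ) (k : ℂ) : ℂ :=
  -(n : ℂ) ^ 2 + (n : ℂ) * ((r : ℂ) - (k + 2) * (s : ℂ))

/-- `Λ_rc^−(r,s,n,k) = −n² − n(r − (k+2)s)`. -/
noncomputable def LamrcM (r s n : ℤ) (k : ℂ) : ℂ :=
  -(n : ℂ) ^ 2 - (n : ℂ) * ((r : ℂ) - (k + 2) * (s : ℂ))

/-- Parametrization of the degeneration pattern `O_rc`: simultaneous occurrence of a
charged and a relaxed singular vector. -/
theorem stmt2 (n r s : ℤ) (hr : 1 ≤ r) (hs : 1 ≤ s) (j k : ℂ) :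
    (Lamch n j = Lam r s j k ↔ j = jrcP r s n k ∨ j = jrcM r s n k) ∧
    (Lamch n (jrcP r s n k) = Lam r s (jrcP r s n k) k ∧
      Lam r s (jrcP r s n k) k = LamrcP r s n k) ∧
    (Lamch n (jrcM r s n k) = Lam r s (jrcM r s n k) k ∧
      Lam r s (jrcM r s n k) k = LamrcM r s n k) := by
  have key : ∀ x : ℂ, Lamch n x - Lam r s x k = (x - jrcP r s n k) * (x - jrcM r s n k) := by
    intro x
    simp only [Lamch, Lam, jplus, jminus, jrcP, jrcM]
    push_cast
    ring
  have hP : Lamch n (jrcP r s n k) = Lam r s (jrcP r s n k) k :=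
    sub_eq_zero.mp (by rw [key]; ring)
  have hM : Lamch n (jrcM r s n k) = Lam r s (jrcM r s n k) k :=
    sub_eq_zero.mp (by rw [key]; ring)
  refine ⟨?_, ⟨hP, ?_⟩, ⟨hM, ?_⟩⟩
  · rw [← sub_eq_zero, key, mul_eq_zero, sub_eq_zero, sub_eq_zero]
  · rw [← hP]
    simp only [Lamch, jrcP, LamrcP]
    ring
  · rw [← hM]
    simp only [Lamch, jrcM, LamrcM]
    ring
end

section
/- For all integers n ≤ −1, m ≥ 0, r ≥ 1, s ≥ 1 and all k ∈ ℂ: Λ_cc(n,m) = Λ(r,s, j_cc(n,m), k) if and only if (k+2)·s = r + (m−n) or (k+2)·s = r − (m−n). -/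
/-- `j_cc(n,m) = −(1+m+n)/2`. -/
noncomputable def jcc (n m : ℤ) : ℂ :=
  -(1 + (m : ℂ) + (n : ℂ)) / 2

/-- `Λ_cc(n,m) = −mn`. -/
noncomputable def Lamcc (n m : ℤ) : ℂ :=
  -((m : ℂ) * (n : ℂ))

/-- Parametrization of the degeneration pattern `O_rcc`: two charged singular vectors
coexisting with a relaxed singular vector, i.e. `k+2 = (r ± (m−n))/s`. -/
theorem stmt4 (n m r s : ℤ) (hn : n ≤ -1) (hm : 0 ≤ m) (hr : 1 ≤ r) (hs : 1 ≤ s)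
    (k : ℂ) :
    Lamcc n m = Lam r s (jcc n m) k ↔
      (k + 2) * (s : ℂ) = (r : ℂ) + ((m : ℂ) - (n : ℂ)) ∨
      (k + 2) * (s : ℂ) = (r : ℂ) - ((m : ℂ) - (n : ℂ)) := by
  -- With t = (k+2)s the equation reads (t - r)² = (m - n)²; the difference of its sides factors.
  have key : Lamcc n m - Lam r s (jcc n m) k =
      -(((k + 2) * (s : ℂ) - ((r : ℂ) + ((m : ℂ) - (n : ℂ)))) *
        ((k + 2) * (s : ℂ) - ((r : ℂ) - ((m : ℂ) - (n : ℂ))))) / 4 := by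
    simp only [Lamcc, Lam, jcc, jplus, jminus]
    push_cast
    ring
  rw [← sub_eq_zero, key]
  simp [sub_eq_zero]
end
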